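/- arXiv:2605.04915 — 5 statements merged into one kernel-verified Lean document; each statement's English description precedes it below -/
import Mathlib

section
/- Let ρ be a full-rank density matrix on ℂ^d and let δ := min_{σ∈D} λ_min(σ) > 0 (positive by compactness of D). For a finite sequence A_1, …, A_k of nonzero positive semidefinite Hermitian d×d matrices and a density matrix τ ∈ D, set S_k(τ) := Σ_{j=1}^k log( tr[A_j ρ] / tr[A_j τ] ). Then there exists a finite constant C̃, depending only on d, ρ, D and Π but not on k, on σ, or on the sequence A_1,…,A_k, such that for every k ≥ 1, every such sequence A_1,…,A_k, and every σ ∈ D: −log ∫_D exp(−S_k(σ'')) Π(dσ'') − S_k(σ) ≤ C̃ + (d²−1)·log k. -/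
/-!
Contract `D` towards `σ` by the factor `ε = 1 / (2k)`, that is, apply
`T τ = σ + ε (τ - σ) = (1 - ε) σ + ε τ`. By convexity `T` maps `D` into itself, and since all the
`A j` are positive semidefinite, `tr[A j (T τ)] ≥ (1 - ε) tr[A j σ]`. Multiplying over `j` and using
Bernoulli's inequality, `exp (-S (T τ)) ≥ (1 - ε) ^ k * exp (-S σ) ≥ exp (-S σ) / 2`.

On the other hand, in real coordinates on the space `V_d` of traceless Hermitian matrices `ν` is a
Haar measure (`isAddHaarMeasure_comap`), so `T '' D` has prior mass `ε ^ n` with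
`n = dim V_d ≤ d² - 1` (`exists_scaling`); here the nonempty relative interior of `D` is what makes
the normalization `Vol D` nonzero. Hence `∫ exp (-S) ≥ exp (-S σ) / 2 * (2k) ^ (-n)`, and taking
logarithms yields the bound with the constant `log 2 + (d² - 1) log 2`.
-/

/- STATEMENT 0: the gap between the mixture log-likelihood ratio and any
pointwise log-likelihood ratio grows at most like C̃ + (d²−1)·log k.

Setup (following the CONTEXT): ν is a nonzero measure on the matrix space that
is supported on the trace-zero Hermitian subspace V_d, is invariant under
translation by elements of V_d, and is finite on compact sets.  Vol is its
translate by I/d (so Vol(A) = ν(A − I/d)), and the prior Π is Vol restricted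
to D and normalized: Π = (Vol D)⁻¹ • Vol.restrict D.  D is a compact convex
set of positive definite density matrices with nonempty interior relative to
the trace-one hyperplane A_d; the relative-interior condition is expressed
directly: some σ₀ ∈ D has a trace-norm neighbourhood within A_d contained in
D.  S_k(τ) = ∑_{j=1}^k log(tr[A_j ρ]/tr[A_j τ]), and the conclusion bounds
−log ∫_D exp(−S_k(σ'')) Π(dσ'') − S_k(σ) uniformly in k ≥ 1, in the sequence
A_1, …, A_k of nonzero PSD matrices, and in σ ∈ D. -/

open MeasureTheory Matrix Finset
open scoped ComplexOrder ENNReal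

noncomputable instance matrixMeasurableSpace {d : ℕ} :
    MeasurableSpace (Matrix (Fin d) (Fin d) ℂ) := borel _

instance matrixBorelSpace {d : ℕ} :
    BorelSpace (Matrix (Fin d) (Fin d) ℂ) := ⟨rfl⟩

/-- The trace norm of a complex `d × d` matrix: the sum of its singular values. -/
noncomputable def traceNorm {d : ℕ} (A : Matrix (Fin d) (Fin d) ℂ) : ℝ :=
  ∑ i, Real.sqrt ((Matrix.posSemidef_conjTranspose_mul_self A).1.eigenvalues i)

/-- The real vector space `V_d` of traceless Hermitian `d × d` matrices. -/
def tracelessHermitian (d : ℕ) : Submodule ℝ (Matrix (Fin d) (Fin d) ℂ) where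
  carrier := {A | A.IsHermitian ∧ A.trace = 0}
  add_mem' := fun ⟨ha, ha'⟩ ⟨hb, hb'⟩ => ⟨ha.add hb, by simp [ha', hb']⟩
  zero_mem' := ⟨Matrix.isHermitian_zero, by simp⟩
  smul_mem' := fun c A ⟨ha, ha'⟩ => ⟨by
    simp [Matrix.IsHermitian, Matrix.conjTranspose_smul, ha.eq], by simp [ha']⟩

/-- The map `(A, t) ↦ Re A + Im A + t • 1` is injective on `V_d × ℝ`: the symmetric and
antisymmetric parts of `Re A + Im A` are `Re A` and `Im A`, and the trace recovers `t`. -/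
lemma finrank_tracelessHermitian_add_one_le {d : ℕ} (hd : d ≠ 0) :
    Module.finrank ℝ (tracelessHermitian d) + 1 ≤ d ^ 2 := by
  let Φ : (tracelessHermitian d × ℝ) →ₗ[ℝ] Matrix (Fin d) (Fin d) ℝ :=
    { toFun := fun p => Matrix.of fun i j =>
        (p.1.1 i j).re + (p.1.1 i j).im + p.2 * (if i = j then 1 else 0)
      map_add' := fun p q => by ext i j; by_cases h : i = j <;> simp [h] <;> ring
      map_smul' := fun c p => by ext i j; by_cases h : i = j <;> simp [h] <;> ring }
  have hΦ : Function.Injective Φ := by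
    rw [← LinearMap.ker_eq_bot, LinearMap.ker_eq_bot']
    rintro ⟨⟨A, hA, htr⟩, t⟩ h
    have h1 : ∀ i j, (A i j).re + (A i j).im + t * (if i = j then 1 else 0) = 0 := fun i j =>
      congrFun (congrFun h i) j
    have h2 : ∀ i j, (A j i).re = (A i j).re ∧ (A j i).im = -(A i j).im := fun i j => by
      have := hA.apply j i
      rw [← this]; simp
    have h3 : (d : ℝ) * t = 0 := by
      have h4 : ∑ i, (A i i).re = 0 := by
        have := congrArg Complex.re htr
        simpa [Matrix.trace] using this
      have h5 : ∀ i, (A i i).im = 0 := fun i => by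
        have := (h2 i i).2
        linarith
      have h6 : ∀ i, (A i i).re = -t := fun i => by
        have := h1 i i
        simp [h5] at this
        linarith
      simp only [h6, Finset.sum_const, Finset.card_univ, Fintype.card_fin, nsmul_eq_mul] at h4
      linarith
    have ht : t = 0 := by simpa [hd] using h3
    subst ht
    have hA0 : A = 0 := by
      ext i j
      have e1 := h1 i j
      have e2 := h1 j i
      rw [(h2 i j).1, (h2 i j).2] at e2
      simp only [zero_mul, add_zero] at e1 e2
      apply Complex.ext <;> simp <;> linarith
    subst hA0
    rfl
  have := LinearMap.finrank_le_finrank_of_injective hΦ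
  simpa [Module.finrank_prod, Module.finrank_matrix, sq] using this

/-- Real coordinates on the space of traceless Hermitian matrices. -/
lemma exists_coordinates {d : ℕ} (hd : d ≠ 0) :
    ∃ n : ℕ, n + 1 ≤ d ^ 2 ∧ ∃ L : (Fin n → ℝ) →ₗ[ℝ] Matrix (Fin d) (Fin d) ℂ,
      Function.Injective L ∧ ∀ A, A ∈ Set.range L ↔ (A.IsHermitian ∧ A.trace = 0) := by
  refine ⟨_, finrank_tracelessHermitian_add_one_le hd,
    (tracelessHermitian d).subtype ∘ₗ
      (Module.finBasis ℝ (tracelessHermitian d)).equivFun.symm.toLinearMap, ?_, fun A => ?_⟩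
  · exact Subtype.val_injective.comp (LinearEquiv.injective _)
  · constructor
    · rintro ⟨x, rfl⟩
      exact ((Module.finBasis ℝ (tracelessHermitian d)).equivFun.symm x).2
    · intro h
      refine ⟨(Module.finBasis ℝ (tracelessHermitian d)).equivFun ⟨A, h⟩, ?_⟩
      change ((Module.finBasis ℝ (tracelessHermitian d)).equivFun.symm
        ((Module.finBasis ℝ (tracelessHermitian d)).equivFun ⟨A, h⟩)).1 = A
      rw [LinearEquiv.symm_apply_apply]

/-- Each eigenvalue of `Aᴴ A` is at most its trace. -/
lemma traceNorm_le {d : ℕ} (A : Matrix (Fin d) (Fin d) ℂ) :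
    traceNorm A ≤ d * Real.sqrt (Aᴴ * A).trace.re := by
  have hA := Matrix.posSemidef_conjTranspose_mul_self A
  have htr : (Aᴴ * A).trace.re = ∑ i, hA.1.eigenvalues i := by
    have := congrArg Complex.re hA.1.trace_eq_sum_eigenvalues
    simpa using this
  calc traceNorm A ≤ ∑ _i : Fin d, Real.sqrt (Aᴴ * A).trace.re := by
        refine Finset.sum_le_sum fun i _ => Real.sqrt_le_sqrt ?_
        rw [htr]
        exact Finset.single_le_sum (fun j _ => hA.eigenvalues_nonneg j) (Finset.mem_univ i)
    _ = _ := by simp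

open scoped MatrixOrder in
lemma trace_mul_pos {d : ℕ} {A τ : Matrix (Fin d) (Fin d) ℂ} (hA : A.PosSemidef) (hA0 : A ≠ 0)
    (hτ : τ.PosDef) : 0 < (A * τ).trace.re := by
  obtain ⟨P, hP⟩ := CStarAlgebra.nonneg_iff_eq_star_mul_self.mp hτ.posSemidef.nonneg
  rw [Matrix.star_eq_conjTranspose] at hP
  have hu : IsUnit P := by
    have := hτ.isUnit
    rw [hP] at this
    exact isUnit_of_mul_isUnit_right this
  have hB := hA.mul_mul_conjTranspose_same P
  have htr : (A * τ).trace = (P * A * Pᴴ).trace := by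
    rw [hP, ← Matrix.mul_assoc, Matrix.trace_mul_comm, Matrix.mul_assoc]
  have hne : (P * A * Pᴴ).trace ≠ 0 := by
    rw [Ne, hB.trace_eq_zero_iff, ← Matrix.star_eq_conjTranspose, hu.star.mul_left_eq_zero,
      hu.mul_right_eq_zero]
    exact hA0
  rw [htr]
  exact (Complex.pos_iff.mp (lt_of_le_of_ne hB.trace_nonneg hne.symm)).1

/-- In real coordinates on `V_d`, the pullback of `ν` is a Haar measure. -/
lemma isAddHaarMeasure_comap {d n : ℕ} (L : (Fin n → ℝ) →ₗ[ℝ] Matrix (Fin d) (Fin d) ℂ)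
    (hL : Topology.IsClosedEmbedding L)
    (hrange : ∀ A, A ∈ Set.range L ↔ (A.IsHermitian ∧ A.trace = 0))
    (ν : Measure (Matrix (Fin d) (Fin d) ℂ)) (hν0 : ν ≠ 0)
    (hνsupp : ν {A | ¬(A.IsHermitian ∧ A.trace = 0)} = 0)
    (hνinv : ∀ v : Matrix (Fin d) (Fin d) ℂ, v.IsHermitian → v.trace = 0 →
      ∀ s : Set (Matrix (Fin d) (Fin d) ℂ), MeasurableSet s →
        ν ((fun A => A + v) ⁻¹' s) = ν s)
    (hνfin : ∀ K : Set (Matrix (Fin d) (Fin d) ℂ), IsCompact K → ν K < ⊤) :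
    (ν.comap L).map L = ν ∧ (ν.comap L).IsAddHaarMeasure := by
  have hLm : MeasurableEmbedding L := hL.measurableEmbedding
  have hmap : (ν.comap L).map L = ν := by
    rw [hLm.map_comap]
    refine Measure.restrict_eq_self_of_ae_mem ?_
    rw [ae_iff]
    simpa only [hrange] using hνsupp
  refine ⟨hmap, ?_⟩
  have : IsFiniteMeasureOnCompacts (ν.comap L) := ⟨fun K hK => by
    rw [hLm.comap_apply]
    exact hνfin _ (hK.image hL.continuous)⟩
  have : NeZero (ν.comap L) := ⟨fun h => hν0 (by rw [← hmap, h, Measure.map_zero])⟩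
  have : (ν.comap L).IsAddLeftInvariant := ⟨fun v => by
    ext s hs
    rw [Measure.map_apply (measurable_const_add v) hs, hLm.comap_apply, hLm.comap_apply]
    have hv := (hrange (L v)).1 ⟨v, rfl⟩
    rw [← hνinv _ hv.1 hv.2 _ (hLm.measurableSet_image.2 hs)]
    congr 1
    ext B
    constructor
    · rintro ⟨x, hx, rfl⟩
      exact ⟨v + x, hx, by simp [add_comm]⟩
    · rintro ⟨y, hy, hyB⟩
      refine ⟨y - v, by simpa using hy, ?_⟩
      simp only at hyB
      rw [map_sub, hyB, add_sub_cancel_right]⟩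
  have : (ν.comap L).IsOpenPosMeasure := inferInstance
  exact { }

/-- The trace-one translate of `ν` gives `D` positive finite mass, and a contraction of `D` towards
one of its points with ratio `ε` scales this mass by `ε ^ n`, where `n = dim V_d ≤ d² - 1`. -/
lemma exists_scaling {d : ℕ} (hd : d ≠ 0)
    (D : Set (Matrix (Fin d) (Fin d) ℂ)) (hDcompact : IsCompact D)
    (hDstates : ∀ σ ∈ D, σ.PosDef ∧ σ.trace = 1)
    (hDint : ∃ σ₀ ∈ D, ∃ r > (0 : ℝ), ∀ τ : Matrix (Fin d) (Fin d) ℂ,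
      τ.IsHermitian → τ.trace = 1 → traceNorm (τ - σ₀) ≤ r → τ ∈ D)
    (ν : Measure (Matrix (Fin d) (Fin d) ℂ)) (hν0 : ν ≠ 0)
    (hνsupp : ν {A | ¬(A.IsHermitian ∧ A.trace = 0)} = 0)
    (hνinv : ∀ v : Matrix (Fin d) (Fin d) ℂ, v.IsHermitian → v.trace = 0 →
      ∀ s : Set (Matrix (Fin d) (Fin d) ℂ), MeasurableSet s →
        ν ((fun A => A + v) ⁻¹' s) = ν s)
    (hνfin : ∀ K : Set (Matrix (Fin d) (Fin d) ℂ), IsCompact K → ν K < ⊤)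
    (Vol : Measure (Matrix (Fin d) (Fin d) ℂ))
    (hVol : Vol = ν.map (fun A => A + (d : ℂ)⁻¹ • (1 : Matrix (Fin d) (Fin d) ℂ))) :
    Vol D ≠ 0 ∧ Vol D ≠ ⊤ ∧ ∃ n : ℕ, n + 1 ≤ d ^ 2 ∧ ∀ ε : ℝ, 0 < ε → ∀ σ ∈ D,
      Vol ((fun τ => σ + ε • (τ - σ)) '' D) = ENNReal.ofReal (ε ^ n) * Vol D := by
  obtain ⟨n, hn, L, hLinj, hrange⟩ := exists_coordinates hd
  have hL : Topology.IsClosedEmbedding L :=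
    LinearMap.isClosedEmbedding_of_injective (LinearMap.ker_eq_bot.2 hLinj)
  obtain ⟨hmap, hHaar⟩ := isAddHaarMeasure_comap L hL hrange ν hν0 hνsupp hνinv hνfin
  set μ := ν.comap L with hμ
  set c : Matrix (Fin d) (Fin d) ℂ := (d : ℂ)⁻¹ • (1 : Matrix (Fin d) (Fin d) ℂ) with hc
  have hcH : c.IsHermitian := by simp [hc, Matrix.IsHermitian, Matrix.conjTranspose_smul]
  have hctr : c.trace = 1 := by
    have : (d : ℂ) ≠ 0 := by exact_mod_cast hd
    simp [hc, this]
  have hcm : Measurable (fun A : Matrix (Fin d) (Fin d) ℂ => A + c) :=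
    (continuous_id.add continuous_const).measurable
  have hVolμ : ∀ S, MeasurableSet S → Vol S = μ {x | L x + c ∈ S} := fun S hS => by
    rw [hVol, Measure.map_apply hcm hS, ← hmap, Measure.map_apply hL.continuous.measurable (hcm hS)]
    rfl
  have hlift : ∀ σ : Matrix (Fin d) (Fin d) ℂ, σ.IsHermitian → σ.trace = 1 → ∃ x, L x = σ - c :=
    fun σ h1 h2 => (hrange _).2 ⟨h1.sub hcH, by simp [h2, hctr]⟩
  refine ⟨?_, ?_, n, hn, fun ε hε σ hσ => ?_⟩
  · rw [hVolμ D hDcompact.measurableSet]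
    obtain ⟨σ₀, hσ₀, r, hr, hball⟩ := hDint
    obtain ⟨x₀, hx₀⟩ := hlift σ₀ (hDstates σ₀ hσ₀).1.1 (hDstates σ₀ hσ₀).2
    let g : (Fin n → ℝ) → ℝ := fun x =>
      d * Real.sqrt ((L x - L x₀)ᴴ * (L x - L x₀)).trace.re
    have hg : Continuous g := by
      have hLc := hL.continuous
      have h1 : Continuous fun x => L x - L x₀ := hLc.sub continuous_const
      exact continuous_const.mul (Real.continuous_sqrt.comp
        (Complex.continuous_re.comp (h1.matrix_conjTranspose.matrix_mul h1).matrix_trace))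
    have hopen : IsOpen {x | g x < r} := isOpen_lt hg continuous_const
    have hne : {x | g x < r}.Nonempty := ⟨x₀, by simpa [g] using hr⟩
    refine ne_of_gt (lt_of_lt_of_le (hopen.measure_pos μ hne) (measure_mono fun x hx => ?_))
    have hxx := (hrange (L x)).1 ⟨x, rfl⟩
    refine hball _ (hxx.1.add hcH) (by simp [hxx.2, hctr]) ?_
    have : L x + c - σ₀ = L x - L x₀ := by rw [hx₀]; abel
    rw [this]
    exact (traceNorm_le _).trans (le_of_lt hx)
  · rw [hVol, Measure.map_apply hcm hDcompact.measurableSet]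
    refine (hνfin _ ?_).ne
    exact (Homeomorph.addRight c).isClosedEmbedding.isCompact_preimage hDcompact
  · have hcont : Continuous fun τ : Matrix (Fin d) (Fin d) ℂ => σ + ε • (τ - σ) := by fun_prop
    rw [hVolμ _ (hDcompact.image hcont).measurableSet, hVolμ _ hDcompact.measurableSet]
    obtain ⟨xσ, hxσ⟩ := hlift σ (hDstates σ hσ).1.1 (hDstates σ hσ).2
    have hset : {x | L x + c ∈ (fun τ => σ + ε • (τ - σ)) '' D}
        = AffineMap.homothety xσ ε '' {x | L x + c ∈ D} := by
      have hσc : σ = L xσ + c := by rw [hxσ]; abel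
      ext x
      constructor
      · rintro ⟨τ, hτ, hτx⟩
        obtain ⟨y, hy⟩ := hlift τ (hDstates τ hτ).1.1 (hDstates τ hτ).2
        have hτc : τ = L y + c := by rw [hy]; abel
        refine ⟨y, by simpa [← hτc] using hτ, hLinj ?_⟩
        simp only [hσc, hτc] at hτx
        rw [← add_left_inj c, ← hτx]
        simp only [AffineMap.homothety_apply, vsub_eq_sub, vadd_eq_add, map_add, map_smul, map_sub]
        module
      · rintro ⟨y, hy, rfl⟩
        refine ⟨_, hy, ?_⟩
        simp only [AffineMap.homothety_apply, vsub_eq_sub, vadd_eq_add, map_add, map_smul, map_sub]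
        rw [hσc]
        module
    rw [hset, Measure.addHaar_image_homothety]
    simp [abs_of_pos hε]

theorem stmt0 {d : ℕ}
    (ρ : Matrix (Fin d) (Fin d) ℂ) (hρ : ρ.PosDef) (hρtr : ρ.trace = 1)
    (D : Set (Matrix (Fin d) (Fin d) ℂ))
    (hDcompact : IsCompact D) (hDconvex : Convex ℝ D)
    (hDstates : ∀ σ ∈ D, σ.PosDef ∧ σ.trace = 1)
    (hDint : ∃ σ₀ ∈ D, ∃ r > (0 : ℝ), ∀ τ : Matrix (Fin d) (Fin d) ℂ,
      τ.IsHermitian → τ.trace = 1 → traceNorm (τ - σ₀) ≤ r → τ ∈ D)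
    (ν : Measure (Matrix (Fin d) (Fin d) ℂ))
    (hν0 : ν ≠ 0)
    (hνsupp : ν {A | ¬(A.IsHermitian ∧ A.trace = 0)} = 0)
    (hνinv : ∀ v : Matrix (Fin d) (Fin d) ℂ, v.IsHermitian → v.trace = 0 →
      ∀ s : Set (Matrix (Fin d) (Fin d) ℂ), MeasurableSet s →
        ν ((fun A => A + v) ⁻¹' s) = ν s)
    (hνfin : ∀ K : Set (Matrix (Fin d) (Fin d) ℂ), IsCompact K → ν K < ⊤)
    (Vol : Measure (Matrix (Fin d) (Fin d) ℂ))
    (hVol : Vol = ν.map (fun A => A + (d : ℂ)⁻¹ • (1 : Matrix (Fin d) (Fin d) ℂ)))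
    (prior : Measure (Matrix (Fin d) (Fin d) ℂ))
    (hprior : prior = (Vol D)⁻¹ • Vol.restrict D) :
    ∃ C : ℝ, ∀ k : ℕ, 1 ≤ k →
      ∀ A : ℕ → Matrix (Fin d) (Fin d) ℂ,
        (∀ j, 1 ≤ j → j ≤ k → (A j).PosSemidef ∧ A j ≠ 0) →
        ∀ σ ∈ D,
          -Real.log (∫ σ'', Real.exp (-(∑ j ∈ Finset.Icc 1 k,
                Real.log ((A j * ρ).trace.re / (A j * σ'').trace.re))) ∂prior)
            - (∑ j ∈ Finset.Icc 1 k,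
                Real.log ((A j * ρ).trace.re / (A j * σ).trace.re))
          ≤ C + ((d : ℝ) ^ 2 - 1) * Real.log k := by
  have hd : d ≠ 0 := by
    rintro rfl
    simp [Matrix.trace] at hρtr
  obtain ⟨hV0, hVtop, n, hn, hscale⟩ := exists_scaling hd D hDcompact hDstates hDint ν hν0 hνsupp
    hνinv hνfin Vol hVol
  refine ⟨Real.log 2 + ((d : ℝ) ^ 2 - 1) * Real.log 2, fun k hk A hA σ hσ => ?_⟩
  have hk0 : (1 : ℝ) ≤ k := by exact_mod_cast hk
  -- With contraction ratio `ε = 1 / (2k)`, Bernoulli gives `(1 - ε) ^ k ≥ 1 / 2`.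
  set ε : ℝ := (2 * k)⁻¹ with hε
  have hε0 : 0 < ε := by positivity
  have hε1 : ε ≤ 1 := inv_le_one_of_one_le₀ (by linarith)
  have hkε : (k : ℝ) * ε = 1 / 2 := by
    rw [hε]; field_simp
  have hbern : (1 / 2 : ℝ) ≤ (1 - ε) ^ k := by
    have := one_add_mul_le_pow (a := -ε) (by linarith) k
    rw [← sub_eq_add_neg] at this
    linarith
  have hpos : ∀ j ∈ Finset.Icc 1 k, ∀ τ : Matrix (Fin d) (Fin d) ℂ, τ.PosDef →
      0 < (A j * τ).trace.re := fun j hj τ hτ => by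
    obtain ⟨h1, h2⟩ := Finset.mem_Icc.1 hj
    exact trace_mul_pos (hA j h1 h2).1 (hA j h1 h2).2 hτ
  set S : Matrix (Fin d) (Fin d) ℂ → ℝ := fun τ => ∑ j ∈ Finset.Icc 1 k,
    Real.log ((A j * ρ).trace.re / (A j * τ).trace.re) with hS
  have hexp : ∀ τ ∈ D, Real.exp (-S τ)
      = ∏ j ∈ Finset.Icc 1 k, ((A j * τ).trace.re / (A j * ρ).trace.re) := fun τ hτ => by
    rw [hS, ← Finset.sum_neg_distrib, Real.exp_sum]
    refine Finset.prod_congr rfl fun j hj => ?_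
    rw [← Real.log_inv, inv_div, Real.exp_log]
    exact div_pos (hpos j hj τ (hDstates τ hτ).1) (hpos j hj ρ hρ)
  have hDm : MeasurableSet D := hDcompact.measurableSet
  have hint : Integrable (fun τ => Real.exp (-S τ)) prior := by
    rw [hprior]
    refine Integrable.smul_measure ?_ (ENNReal.inv_ne_top.2 hV0)
    have hcont : Continuous fun τ : Matrix (Fin d) (Fin d) ℂ =>
        ∏ j ∈ Finset.Icc 1 k, ((A j * τ).trace.re / (A j * ρ).trace.re) :=
      continuous_finsetProd _ fun j _ => (Complex.continuous_re.comp
        (continuous_const.matrix_mul continuous_id).matrix_trace).div_const _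
    have h1 : IntegrableOn _ D Vol :=
      hcont.continuousOn.integrableOn_of_subset_isCompact hDcompact hDm subset_rfl hVtop
    exact h1.congr_fun (fun τ hτ => (hexp τ hτ).symm) hDm
  let T : Matrix (Fin d) (Fin d) ℂ → Matrix (Fin d) (Fin d) ℂ := fun τ => σ + ε • (τ - σ)
  have hTD : T '' D ⊆ D := by
    rintro _ ⟨τ, hτ, rfl⟩
    exact hDconvex.add_smul_sub_mem hσ hτ ⟨hε0.le, hε1⟩
  have hTm : MeasurableSet (T '' D) := by
    have : Continuous T := by fun_prop
    exact (hDcompact.image this).measurableSet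
  have hlow : ∀ τ ∈ T '' D, 1 / 2 * Real.exp (-S σ) ≤ Real.exp (-S τ) := by
    rintro _ ⟨τ, hτ, rfl⟩
    rw [hexp _ hσ, hexp _ (hTD ⟨τ, hτ, rfl⟩)]
    have hprod : 0 ≤ ∏ j ∈ Finset.Icc 1 k, ((A j * σ).trace.re / (A j * ρ).trace.re) :=
      Finset.prod_nonneg fun j hj =>
        (div_pos (hpos j hj σ (hDstates σ hσ).1) (hpos j hj ρ hρ)).le
    calc _ ≤ (1 - ε) ^ k * ∏ j ∈ Finset.Icc 1 k, ((A j * σ).trace.re / (A j * ρ).trace.re) :=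
          mul_le_mul_of_nonneg_right hbern hprod
      _ = ∏ j ∈ Finset.Icc 1 k, ((1 - ε) * ((A j * σ).trace.re / (A j * ρ).trace.re)) := by
          rw [Finset.prod_mul_distrib]; simp
      _ ≤ _ := by
          refine Finset.prod_le_prod (fun j hj => mul_nonneg (by linarith)
            (div_pos (hpos j hj σ (hDstates σ hσ).1) (hpos j hj ρ hρ)).le) fun j hj => ?_
          rw [← mul_div_assoc]
          refine div_le_div_of_nonneg_right ?_ (hpos j hj ρ hρ).le
          have h1 : (A j * T τ).trace.re
              = (A j * σ).trace.re + ε * ((A j * τ).trace.re - (A j * σ).trace.re) := by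
            simp [T, Matrix.mul_add, Matrix.mul_sub]
          have h2 := mul_pos hε0 (hpos j hj τ (hDstates τ hτ).1)
          rw [h1]
          linarith
  have hmass : prior.real (T '' D) = ε ^ n := by
    rw [hprior, Measure.real, Measure.smul_apply, Measure.restrict_apply hTm,
      Set.inter_eq_left.2 hTD, hscale ε hε0 σ hσ, smul_eq_mul, mul_left_comm,
      ENNReal.inv_mul_cancel hV0 hVtop, mul_one, ENNReal.toReal_ofReal (by positivity)]
  have hprfin : IsFiniteMeasure prior := ⟨by
    rw [hprior, Measure.smul_apply, Measure.restrict_apply_univ, smul_eq_mul,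
      ENNReal.inv_mul_cancel hV0 hVtop]
    exact ENNReal.one_lt_top⟩
  have hI : 1 / 2 * Real.exp (-S σ) * ε ^ n ≤ ∫ τ, Real.exp (-S τ) ∂prior := by
    refine le_trans ?_ (mul_meas_ge_le_integral_of_nonneg
      (ae_of_all _ fun τ => (Real.exp_pos _).le) hint (1 / 2 * Real.exp (-S σ)))
    rw [← hmass]
    exact mul_le_mul_of_nonneg_left (measureReal_mono hlow) (by positivity)
  have hlog := Real.log_le_log (by positivity) hI
  rw [Real.log_mul (by positivity) (by positivity), Real.log_mul (by norm_num) (by positivity),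
    Real.log_exp, Real.log_pow, hε, Real.log_inv, Real.log_mul (by norm_num) (by positivity),
    one_div, Real.log_inv] at hlog
  have hn' : (n : ℝ) ≤ (d : ℝ) ^ 2 - 1 := by
    have : ((n + 1 : ℕ) : ℝ) ≤ ((d ^ 2 : ℕ) : ℝ) := by exact_mod_cast hn
    push_cast at this
    linarith
  have hl : 0 ≤ Real.log 2 + Real.log k :=
    add_nonneg (Real.log_nonneg (by norm_num)) (Real.log_nonneg hk0)
  have := mul_le_mul_of_nonneg_right hn' hl
  linarith
end

section
/- Let ρ be a full-rank density matrix on ℂ^d, let δ > 0, and let σ, σ' be density matrices on ℂ^d with σ ⪰ δ·I and σ' ⪰ δ·I. Let A_1, …, A_k be nonzero positive semidefinite Hermitian d×d matrices and set S_k(τ) := Σ_{j=1}^k log( tr[A_j ρ] / tr[A_j τ] ). Then |S_k(σ) − S_k(σ')| ≤ k · log( 1 + ‖σ − σ'‖₁ / δ ). -/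
/-!
The traces `s = tr(Aσ)` and `s' = tr(Aσ')` are both at least `δ · tr A`, because `σ, σ' ⪰ δ·I`,
and they differ by at most `‖σ - σ'‖₁ · tr A`. Hence each is at most `1 + ‖σ - σ'‖₁ / δ` times the
other, which bounds every summand of `S_k(σ) - S_k(σ')`; the numerators `tr(Aρ)` cancel.

The estimate `|tr(AΔ)| ≤ ‖Δ‖₁ · tr A` goes through the Frobenius norm: Cauchy–Schwarz gives
`|tr(AΔ)| ≤ ‖A‖_F ‖Δ‖_F`. Writing `A = BᴴB` gives `‖A‖_F ≤ ‖B‖_F² = tr A`, and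
`‖Δ‖_F² = tr(ΔᴴΔ)` is the sum of the squared singular values, so `‖Δ‖_F ≤ ‖Δ‖₁`.
-/

/- STATEMENT 2: Lipschitz-type bound for the pointwise sequential log-likelihood ratio.
`traceNorm` is the sum of singular values (trace norm). `σ ⪰ δ·I` is stated as
`(σ - δ • 1).PosSemidef`. -/

open Matrix Finset
open scoped ComplexOrder

section Frobenius

open scoped Matrix.Norms.Frobenius

lemma frobenius_sq {d : ℕ} (X : Matrix (Fin d) (Fin d) ℂ) :
    ‖X‖ ^ 2 = ∑ i, ∑ j, ‖X i j‖ ^ 2 := by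
  rw [Matrix.frobenius_norm_def, ← Real.sqrt_eq_rpow, Real.sq_sqrt (by positivity)]
  simp

lemma frobenius_sq_eq_trace {d : ℕ} (X : Matrix (Fin d) (Fin d) ℂ) :
    ‖X‖ ^ 2 = (Xᴴ * X).trace.re := by
  rw [frobenius_sq, Finset.sum_comm]
  simp [Matrix.trace, Matrix.mul_apply, ← Complex.normSq_eq_norm_sq, Complex.normSq_apply]

/-- Cauchy–Schwarz for the trace pairing. -/
lemma norm_trace_mul_le {d : ℕ} (X Y : Matrix (Fin d) (Fin d) ℂ) :
    ‖(X * Y).trace‖ ≤ ‖X‖ * ‖Y‖ := by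
  have h1 : ‖(X * Y).trace‖ ≤ ∑ p : Fin d × Fin d, ‖X p.1 p.2‖ * ‖Y p.2 p.1‖ := by
    simp only [Matrix.trace, Matrix.diag_apply, Matrix.mul_apply, Fintype.sum_prod_type]
    refine (norm_sum_le _ _).trans (Finset.sum_le_sum fun i _ => ?_)
    refine (norm_sum_le _ _).trans (Finset.sum_le_sum fun j _ => ?_)
    rw [norm_mul]
  have h2 := Finset.sum_mul_sq_le_sq_mul_sq Finset.univ
    (fun p : Fin d × Fin d => ‖X p.1 p.2‖) (fun p => ‖Y p.2 p.1‖)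
  have hX : ∑ p : Fin d × Fin d, ‖X p.1 p.2‖ ^ 2 = ‖X‖ ^ 2 := by
    rw [frobenius_sq, Fintype.sum_prod_type]
  have hY : ∑ p : Fin d × Fin d, ‖Y p.2 p.1‖ ^ 2 = ‖Y‖ ^ 2 := by
    rw [frobenius_sq, Fintype.sum_prod_type, Finset.sum_comm]
  rw [hX, hY, ← mul_pow] at h2
  exact h1.trans ((le_abs_self _).trans (abs_le_of_sq_le_sq h2 (by positivity)))

open scoped MatrixOrder in
lemma frobenius_le_trace {d : ℕ} {A : Matrix (Fin d) (Fin d) ℂ} (hA : A.PosSemidef) :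
    ‖A‖ ≤ A.trace.re := by
  obtain ⟨B, rfl⟩ := CStarAlgebra.nonneg_iff_eq_star_mul_self.mp hA.nonneg
  rw [Matrix.star_eq_conjTranspose, ← frobenius_sq_eq_trace, sq]
  exact (Matrix.frobenius_norm_mul _ _).trans_eq (by rw [Matrix.frobenius_norm_conjTranspose])

lemma traceNorm_nonneg {d : ℕ} (X : Matrix (Fin d) (Fin d) ℂ) : 0 ≤ traceNorm X :=
  Finset.sum_nonneg fun _ _ => Real.sqrt_nonneg _

lemma frobenius_le_traceNorm {d : ℕ} (X : Matrix (Fin d) (Fin d) ℂ) : ‖X‖ ≤ traceNorm X := by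
  have hP := Matrix.posSemidef_conjTranspose_mul_self X
  refine le_of_sq_le_sq ?_ (traceNorm_nonneg X)
  rw [frobenius_sq_eq_trace, hP.1.trace_eq_sum_eigenvalues]
  calc _ = ∑ i, Real.sqrt (hP.1.eigenvalues i) ^ 2 := by
        simp [Real.sq_sqrt (hP.eigenvalues_nonneg _)]
    _ ≤ _ := Finset.sum_sq_le_sq_sum_of_nonneg fun _ _ => Real.sqrt_nonneg _

lemma abs_trace_mul_re_le {d : ℕ} {A : Matrix (Fin d) (Fin d) ℂ} (hA : A.PosSemidef)
    (X : Matrix (Fin d) (Fin d) ℂ) : |(A * X).trace.re| ≤ A.trace.re * traceNorm X :=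
  calc |(A * X).trace.re| ≤ ‖(A * X).trace‖ := Complex.abs_re_le_norm _
    _ ≤ ‖A‖ * ‖X‖ := norm_trace_mul_le A X
    _ ≤ _ := mul_le_mul (frobenius_le_trace hA) (frobenius_le_traceNorm X) (norm_nonneg _)
      ((norm_nonneg _).trans (frobenius_le_trace hA))

end Frobenius

open scoped MatrixOrder in
lemma trace_mul_re_nonneg {d : ℕ} {A X : Matrix (Fin d) (Fin d) ℂ} (hA : A.PosSemidef)
    (hX : X.PosSemidef) : 0 ≤ (A * X).trace.re := by
  obtain ⟨B, rfl⟩ := CStarAlgebra.nonneg_iff_eq_star_mul_self.mp hA.nonneg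
  rw [Matrix.star_eq_conjTranspose, Matrix.mul_assoc, Matrix.trace_mul_comm]
  exact (Complex.le_def.mp (hX.mul_mul_conjTranspose_same B).trace_nonneg).1

lemma le_trace_mul_re {d : ℕ} {A σ : Matrix (Fin d) (Fin d) ℂ} {δ : ℝ} (hA : A.PosSemidef)
    (hσ : (σ - (δ : ℂ) • (1 : Matrix (Fin d) (Fin d) ℂ)).PosSemidef) :
    δ * A.trace.re ≤ (A * σ).trace.re := by
  have h := trace_mul_re_nonneg hA hσ
  simpa [Matrix.mul_sub, Matrix.trace_sub] using h

lemma trace_re_pos {d : ℕ} {A : Matrix (Fin d) (Fin d) ℂ} (hA : A.PosSemidef) (h0 : A ≠ 0) :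
    0 < A.trace.re := by
  have h : 0 < A.trace := lt_of_le_of_ne hA.trace_nonneg fun h => h0 (hA.trace_eq_zero_iff.mp h.symm)
  exact (Complex.lt_def.mp h).1

/-- The scalar form of the bound: a difference of size `t * a` is a relative error of at most
`t / δ` for numbers that are at least `δ * a`. -/
lemma log_sub_log_le {a δ t s s' : ℝ} (ha : 0 < a) (hδ : 0 < δ) (ht : 0 ≤ t)
    (hs : δ * a ≤ s) (hs' : δ * a ≤ s') (h : s - s' ≤ a * t) :
    Real.log s - Real.log s' ≤ Real.log (1 + t / δ) := by
  have hpos : 0 < δ * a := mul_pos hδ ha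
  have hs0 : 0 < s := hpos.trans_le hs
  have hs'0 : 0 < s' := hpos.trans_le hs'
  rw [sub_le_iff_le_add, ← Real.log_mul (by positivity) hs'0.ne']
  refine Real.log_le_log hs0 ?_
  have h1 : a * t ≤ t / δ * s' := by
    calc a * t = t / δ * (δ * a) := by field_simp
      _ ≤ _ := by gcongr
  linarith

theorem stmt2 {d : ℕ} (ρ σ σ' : Matrix (Fin d) (Fin d) ℂ) (δ : ℝ)
    (hρ : ρ.PosDef) (hρtr : ρ.trace = 1)
    (hσ : σ.PosSemidef) (hσtr : σ.trace = 1)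
    (hσ' : σ'.PosSemidef) (hσ'tr : σ'.trace = 1)
    (hδ : 0 < δ)
    (hσδ : (σ - (δ : ℂ) • (1 : Matrix (Fin d) (Fin d) ℂ)).PosSemidef)
    (hσ'δ : (σ' - (δ : ℂ) • (1 : Matrix (Fin d) (Fin d) ℂ)).PosSemidef)
    (k : ℕ) (A : ℕ → Matrix (Fin d) (Fin d) ℂ)
    (hA : ∀ j, 1 ≤ j → j ≤ k → (A j).PosSemidef ∧ A j ≠ 0) :
    |(∑ j ∈ Finset.Icc 1 k, Real.log ((A j * ρ).trace.re / (A j * σ).trace.re)) -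
      (∑ j ∈ Finset.Icc 1 k, Real.log ((A j * ρ).trace.re / (A j * σ').trace.re))|
      ≤ (k : ℝ) * Real.log (1 + traceNorm (σ - σ') / δ) := by
  rw [← Finset.sum_sub_distrib]
  have hcard : (k : ℝ) * Real.log (1 + traceNorm (σ - σ') / δ) =
      ∑ j ∈ Finset.Icc 1 k, Real.log (1 + traceNorm (σ - σ') / δ) := by simp
  rw [hcard]
  refine (Finset.abs_sum_le_sum_abs _ _).trans (Finset.sum_le_sum fun j hj => ?_)
  obtain ⟨hj1, hjk⟩ := Finset.mem_Icc.mp hj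
  obtain ⟨hAj, hAj0⟩ := hA j hj1 hjk
  have ht := traceNorm_nonneg (σ - σ')
  have ha := trace_re_pos hAj hAj0
  have hs := le_trace_mul_re hAj hσδ
  have hs' := le_trace_mul_re hAj hσ'δ
  have hdiff := abs_trace_mul_re_le hAj (σ - σ')
  rw [Matrix.mul_sub, Matrix.trace_sub, Complex.sub_re, abs_le] at hdiff
  have hpos : 0 < δ * (A j).trace.re := mul_pos hδ ha
  -- When `tr(Aρ) = 0`, both logarithms are the junk value `log 0 = 0`.
  rcases eq_or_ne (A j * ρ).trace.re 0 with hr | hr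
  · simpa [hr] using Real.log_nonneg (by linarith [div_nonneg ht hδ.le])
  · rw [Real.log_div hr (hpos.trans_le hs).ne', Real.log_div hr (hpos.trans_le hs').ne', abs_le]
    have h1 := log_sub_log_le ha hδ ht hs hs' (by linarith)
    have h2 := log_sub_log_le ha hδ ht hs' hs (by linarith)
    constructor <;> linarith
end

section
/- Let ρ be a full-rank density matrix on ℂ^d, let D be a compact convex set of positive definite density matrices on ℂ^d, and let Π be a Borel probability measure on D (with respect to the trace-norm topology). Fix nonzero positive semidefinite Hermitian d×d matrices A_1, …, A_k. For 0 ≤ j ≤ k define L_j(σ) := Π_{i=1}^{j} tr[A_i σ]/tr[A_i ρ] (with L_0(σ) = 1), the mixture likelihood L̃_j := ∫_D L_j(σ) Π(dσ), the posterior Π̃_j(dσ) := L_j(σ)Π(dσ)/L̃_j, and the barycentre σ̃_j := ∫_D σ Π̃_j(dσ) (Bochner integral). Then L̃_j > 0 for every j, and for every 1 ≤ j ≤ k: L̃_j = L̃_{j−1} · tr[A_j σ̃_{j−1}]/tr[A_j ρ]; consequently L̃_k = Π_{j=1}^{k} tr[A_j σ̃_{j−1}]/tr[A_j ρ]. -/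
/-!
The likelihood `L_j` is a polynomial in the entries of `σ`, hence continuous and, since `prior` is
carried by the compact set `D`, integrable.  Every factor `tr[A_i σ]` is strictly positive for
`A_i ≠ 0` positive semidefinite and `σ` positive definite (`trace_mul_re_pos`), so `L_j > 0`
almost surely and `L̃_j > 0`.

The recursion is linearity of the integral: `L_j(σ) = L_{j-1}(σ) · tr[A_j σ] / tr[A_j ρ]`, and
pulling the linear functional `tr[A_j ·]` out of `∫ L_{j-1}(σ) σ` produces
`L̃_{j-1} · tr[A_j σ̃_{j-1}]` (`trace_mul_integral_entries`).  The product formula follows by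
induction from `L̃_0 = 1`.
-/

/- STATEMENT 3: positivity and the barycentre recursion for the mixture
likelihood ratio.  The Borel probability measure Π on D is modelled as a
probability measure `prior` on the matrix space with `prior D = 1`; the Borel
σ-algebra of the trace-norm topology coincides with that of the standard
topology on matrices (all norms on a finite-dimensional space are equivalent).
The barycentre (a Bochner integral over D) is expressed entrywise:
(σ̃_j)_{a b} = (∫ L_j(σ)·σ_{a b} dΠ)/L̃_j, which agrees with the Bochner
integral of σ against the posterior Π̃_j(dσ) = L_j(σ)Π(dσ)/L̃_j in finite
dimension.  Products over 1 ≤ i ≤ j are over `Finset.Icc 1 j`. -/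

open MeasureTheory Matrix Finset
open scoped ComplexOrder

open scoped MatrixOrder in
lemma exists_eq_conjTranspose_mul_self {d : ℕ} {A : Matrix (Fin d) (Fin d) ℂ}
    (hA : A.PosSemidef) : ∃ B : Matrix (Fin d) (Fin d) ℂ, A = Bᴴ * B :=
  CStarAlgebra.nonneg_iff_eq_star_mul_self.mp hA.nonneg

/-- With `A = Bᴴ B`, the trace of `A σ` is that of the positive semidefinite matrix `B σ Bᴴ`, which
vanishes only if `B = 0`, by definiteness of `σ`. -/
lemma trace_mul_re_pos {d : ℕ} {A σ : Matrix (Fin d) (Fin d) ℂ}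
    (hA : A.PosSemidef) (hA0 : A ≠ 0) (hσ : σ.PosDef) : 0 < (A * σ).trace.re := by
  obtain ⟨B, rfl⟩ := exists_eq_conjTranspose_mul_self hA
  have hps : (B * σ * Bᴴ).PosSemidef := hσ.posSemidef.mul_mul_conjTranspose_same B
  have htr : (Bᴴ * B * σ).trace = (B * σ * Bᴴ).trace := by
    rw [Matrix.mul_assoc, Matrix.trace_mul_comm]
  rw [htr]
  have hne : (B * σ * Bᴴ).trace ≠ 0 := by
    intro h0
    rw [hps.trace_eq_zero_iff] at h0
    apply hA0
    have hB : Bᴴ = 0 := by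
      refine Matrix.ext_of_mulVec_single fun i => ?_
      set x : Fin d → ℂ := Pi.single i 1
      by_contra hx
      rw [Matrix.zero_mulVec] at hx
      have hpos := hσ.dotProduct_mulVec_pos hx
      have hz : star (Bᴴ *ᵥ x) ⬝ᵥ (σ *ᵥ (Bᴴ *ᵥ x)) = 0 := by
        rw [Matrix.star_mulVec, Matrix.conjTranspose_conjTranspose, ← Matrix.dotProduct_mulVec,
          Matrix.mulVec_mulVec, Matrix.mulVec_mulVec, h0]
        simp
      exact hpos.ne' hz
    rw [hB, Matrix.zero_mul]
  have hlt : 0 < (B * σ * Bᴴ).trace := lt_of_le_of_ne hps.trace_nonneg hne.symm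
  exact (Complex.pos_iff.mp hlt).1

lemma integrable_of_continuous_of_compact {d : ℕ} {E : Type*} [NormedAddCommGroup E]
    [SecondCountableTopology E]
    {D : Set (Matrix (Fin d) (Fin d) ℂ)} (hD : IsCompact D)
    {μ : Measure (Matrix (Fin d) (Fin d) ℂ)} [IsProbabilityMeasure μ]
    (hμ : ∀ᵐ σ ∂μ, σ ∈ D) {f : Matrix (Fin d) (Fin d) ℂ → E} (hf : Continuous f) :
    Integrable f μ := by
  have h : IntegrableOn f D μ := hf.continuousOn.integrableOn_compact' hD hD.measurableSet
  rwa [IntegrableOn, Measure.restrict_eq_self_of_ae_mem hμ] at h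

/-- The linear functional `M ↦ Re tr[A M]` commutes with the entrywise integral of `σ` against the
unnormalised posterior density `f`; `c` is the normalising constant. -/
lemma trace_mul_integral_entries {d : ℕ} {μ : Measure (Matrix (Fin d) (Fin d) ℂ)}
    {f : Matrix (Fin d) (Fin d) ℂ → ℝ} {A M : Matrix (Fin d) (Fin d) ℂ} {c : ℝ} (hc : c ≠ 0)
    (hint : ∀ a b, Integrable (fun σ : Matrix (Fin d) (Fin d) ℂ => (f σ : ℂ) * σ a b) μ)
    (hM : ∀ a b, M a b = (∫ σ, (f σ : ℂ) * σ a b ∂μ) / (c : ℂ)) :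
    c * (A * M).trace.re = ∫ σ, f σ * (A * σ).trace.re ∂μ := by
  have hpt : ∀ σ : Matrix (Fin d) (Fin d) ℂ,
      (f σ : ℂ) * (A * σ).trace = ∑ a, ∑ b, A a b * ((f σ : ℂ) * σ b a) := by
    intro σ
    simp only [Matrix.trace, Matrix.diag, Matrix.mul_apply, Finset.mul_sum]
    exact Finset.sum_congr rfl fun a _ => Finset.sum_congr rfl fun b _ => by ring
  have hint' : ∀ a b, Integrable
      (fun σ : Matrix (Fin d) (Fin d) ℂ => A a b * ((f σ : ℂ) * σ b a)) μ :=
    fun a b => (hint b a).const_mul _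
  have hintsum : Integrable (fun σ => (f σ : ℂ) * (A * σ).trace) μ := by
    simp only [hpt]
    exact integrable_finsetSum _ fun a _ => integrable_finsetSum _ fun b _ => hint' a b
  have hcC : (c : ℂ) ≠ 0 := by exact_mod_cast hc
  have hmain : (c : ℂ) * (A * M).trace = ∫ σ, (f σ : ℂ) * (A * σ).trace ∂μ := by
    simp only [hpt]
    rw [integral_finsetSum _ fun a _ => integrable_finsetSum _ fun b _ => hint' a b]
    simp only [Matrix.trace, Matrix.diag, Matrix.mul_apply, Finset.mul_sum]
    refine Finset.sum_congr rfl fun a _ => ?_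
    rw [integral_finsetSum _ fun b _ => hint' a b]
    refine Finset.sum_congr rfl fun b _ => ?_
    rw [integral_const_mul, hM]
    field_simp
  have hre := congrArg Complex.re hmain
  rw [Complex.re_ofReal_mul] at hre
  rw [hre, ← RCLike.re_eq_complex_re, ← integral_re hintsum]
  simp

theorem stmt3 {d : ℕ}
    (ρ : Matrix (Fin d) (Fin d) ℂ) (hρ : ρ.PosDef) (hρtr : ρ.trace = 1)
    (D : Set (Matrix (Fin d) (Fin d) ℂ))
    (hDcompact : IsCompact D) (hDconvex : Convex ℝ D)
    (hDstates : ∀ σ ∈ D, σ.PosDef ∧ σ.trace = 1)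
    (prior : Measure (Matrix (Fin d) (Fin d) ℂ)) [IsProbabilityMeasure prior]
    (hsupp : prior D = 1)
    (k : ℕ) (A : ℕ → Matrix (Fin d) (Fin d) ℂ)
    (hA : ∀ j, 1 ≤ j → j ≤ k → (A j).PosSemidef ∧ A j ≠ 0)
    (L : ℕ → Matrix (Fin d) (Fin d) ℂ → ℝ)
    (hL : ∀ j σ, L j σ = ∏ i ∈ Finset.Icc 1 j, ((A i * σ).trace.re / (A i * ρ).trace.re))
    (Ltil : ℕ → ℝ)
    (hLtil : ∀ j, Ltil j = ∫ σ, L j σ ∂prior)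
    (bary : ℕ → Matrix (Fin d) (Fin d) ℂ)
    (hbary : ∀ j a b, bary j a b = (∫ σ, (L j σ : ℂ) * σ a b ∂prior) / (Ltil j : ℂ)) :
    (∀ j ≤ k, 0 < Ltil j) ∧
    (∀ j, 1 ≤ j → j ≤ k →
      Ltil j = Ltil (j - 1) * ((A j * bary (j - 1)).trace.re / (A j * ρ).trace.re)) ∧
    Ltil k = ∏ j ∈ Finset.Icc 1 k, ((A j * bary (j - 1)).trace.re / (A j * ρ).trace.re) := by
  have hae : ∀ᵐ σ ∂prior, σ ∈ D :=
    (mem_ae_iff_prob_eq_one hDcompact.measurableSet).mpr hsupp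
  have htrcont : ∀ i, Continuous fun σ : Matrix (Fin d) (Fin d) ℂ => (A i * σ).trace.re :=
    fun i => Complex.continuous_re.comp (continuous_const.matrix_mul continuous_id).matrix_trace
  have hLcont : ∀ j, Continuous (L j) := by
    intro j
    rw [show L j = _ from funext (hL j)]
    exact continuous_finsetProd _ fun i _ => (htrcont i).div_const _
  have hLpos : ∀ j ≤ k, ∀ σ ∈ D, 0 < L j σ := by
    intro j hj σ hσ
    rw [hL]
    refine Finset.prod_pos fun i hi => ?_
    rw [Finset.mem_Icc] at hi
    obtain ⟨hps, h0⟩ := hA i hi.1 (hi.2.trans hj)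
    exact div_pos (trace_mul_re_pos hps h0 (hDstates σ hσ).1) (trace_mul_re_pos hps h0 hρ)
  have hLtilpos : ∀ j ≤ k, 0 < Ltil j := by
    intro j hj
    have hpos : ∀ᵐ σ ∂prior, 0 < L j σ := hae.mono fun σ hσ => hLpos j hj σ hσ
    rw [hLtil, integral_pos_iff_support_of_nonneg_ae (hpos.mono fun σ h => h.le)
      (integrable_of_continuous_of_compact hDcompact hae (hLcont j))]
    refine lt_of_lt_of_le ?_ (measure_mono fun σ hσ => (hLpos j hj σ hσ).ne')
    rw [hsupp]
    exact one_pos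
  have hrec : ∀ j, 1 ≤ j → j ≤ k →
      Ltil j = Ltil (j - 1) * ((A j * bary (j - 1)).trace.re / (A j * ρ).trace.re) := by
    intro j h1 hj
    obtain ⟨m, rfl⟩ : ∃ m, j = m + 1 := ⟨j - 1, by omega⟩
    rw [Nat.add_sub_cancel, ← mul_div_assoc,
      trace_mul_integral_entries (hLtilpos m (by omega)).ne' (fun a b => ?_) (hbary m),
      hLtil, ← integral_div]
    · refine integral_congr_ae (ae_of_all _ fun σ => ?_)
      simp only [hL]
      rw [Finset.prod_Icc_succ_top (by omega), mul_div_assoc]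
    · exact integrable_of_continuous_of_compact hDcompact hae
        ((Complex.continuous_ofReal.comp (hLcont m)).mul (continuous_id.matrix_elem a b))
  refine ⟨hLtilpos, hrec, ?_⟩
  have hprod : ∀ n ≤ k, Ltil n =
      ∏ j ∈ Finset.Icc 1 n, ((A j * bary (j - 1)).trace.re / (A j * ρ).trace.re) := by
    intro n
    induction n with
    | zero => intro _; simp [hLtil, hL]
    | succ n ih =>
      intro hn
      rw [Finset.prod_Icc_succ_top (by omega), ← ih (by omega), hrec (n + 1) (by omega) hn,
        Nat.add_sub_cancel]
  exact hprod k le_rfl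
end

section
/- Let ρ be a full-rank density matrix on ℂ^d, let X be a finite set with |X| ≥ 2, and let D be a nonempty compact set (in trace norm) of full-rank density matrices on ℂ^d with ρ ∉ D. Then inf_{σ∈D} sup_{M ∈ POVMs on X} D(P_{ρ,M} ‖ P_{σ,M}) > 0; that is, there exists η > 0 such that for every σ ∈ D there is a POVM M on X with D(P_{ρ,M} ‖ P_{σ,M}) ≥ η. -/
/-!
For a state `σ ≠ ρ` put `Δ = ρ - σ` and measure with the two-outcome POVM `(1 ± Δ) / 2`, the
remaining outcomes having effect `0`. A density matrix is at most `1`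
(`posSemidef_one_sub_of_trace_eq_one`), so both effects are positive definite. Since `tr Δ = 0`,
the probabilities of the first outcome under `ρ` and `σ` differ by `tr (Δ²) / 2`.

The elementary inequality `log t ≥ 2 (1 - t ^ (-1/2))` bounds the divergence below by the squared
Hellinger distance `∑ (√p - √q)²`, hence by `(p a - q a)² / 4` for every outcome `a`
(`sq_sub_div_four_le_klDivFin`). So the divergence of this POVM is at least `(tr (Δ²) / 2)² / 4`.
The function `σ ↦ tr ((ρ - σ)²)` is continuous, and it is positive on `D` because `ρ ∉ D`, so it
has a positive minimum on the compact set `D`.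
-/


/- STATEMENT 7: separation of a full-rank state ρ from a compact set D of
full-rank states not containing ρ, in terms of measured relative entropy:
∃ η > 0 such that for every σ ∈ D there is a POVM M on X with
D(P_{ρ,M} ‖ P_{σ,M}) ≥ η.
Since ρ and all σ ∈ D are full rank, P_{ρ,M}(x) = 0 iff M(x) = 0 iff
P_{σ,M}(x) = 0, so the KL divergence is the real-valued sum
∑ p(x)·log(p(x)/q(x)) (with the convention 0·log 0 = 0, valid for `Real.log`
since `Real.log 0 = 0`).  Compactness in trace norm coincides with compactness
for the standard topology on matrices, since all norms on a finite-dimensional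
space are equivalent. -/

open Matrix
open scoped ComplexOrder

/-- A POVM on the finite outcome set `X`. -/
def IsPOVM {d : ℕ} {X : Type*} [Fintype X] (M : X → Matrix (Fin d) (Fin d) ℂ) : Prop :=
  (∀ x, (M x).PosSemidef) ∧ ∑ x, M x = 1

/-- The outcome distribution induced by a state `τ` and a POVM `M`. -/
noncomputable def probOf {d : ℕ} {X : Type*} [Fintype X]
    (τ : Matrix (Fin d) (Fin d) ℂ) (M : X → Matrix (Fin d) (Fin d) ℂ) : X → ℝ :=
  fun x => (M x * τ).trace.re

/-- Kullback–Leibler divergence between distributions on a finite set. -/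
noncomputable def klDivFin {X : Type*} [Fintype X] (p q : X → ℝ) : ℝ :=
  ∑ x, p x * Real.log (p x / q x)

/-- The termwise comparison of divergence with squared Hellinger distance; the extra summand `p - q`
vanishes after summation. -/
lemma sqrt_sub_sq_le_mul_log {p q : ℝ} (hp : 0 ≤ p) (hq : 0 ≤ q) (h : q = 0 → p = 0) :
    (√p - √q) ^ 2 + (p - q) ≤ p * Real.log (p / q) := by
  rcases hp.eq_or_lt with rfl | hp'
  · simp [Real.sq_sqrt hq]
  have hq' : 0 < q := lt_of_le_of_ne hq fun h0 => hp'.ne' (h h0.symm)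
  have hsp := Real.sqrt_pos.2 hp'
  have hsq := Real.sqrt_pos.2 hq'
  have hp2 : √p ^ 2 = p := Real.sq_sqrt hp
  have hq2 : √q ^ 2 = q := Real.sq_sqrt hq
  have hlog : Real.log (p / q) = -(2 * Real.log (√q / √p)) := by
    rw [Real.log_div hp'.ne' hq'.ne', Real.log_div hsq.ne' hsp.ne', Real.log_sqrt hp,
      Real.log_sqrt hq]
    ring
  have h1 : Real.log (√q / √p) ≤ √q / √p - 1 := Real.log_le_sub_one_of_pos (by positivity)
  have h2 : p * (√q / √p) = √p * √q := by
    field_simp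
    rw [hp2]
  rw [hlog]
  nlinarith [mul_le_mul_of_nonneg_left h1 hp]

lemma sq_sub_div_four_le_sqrt_sub_sq {p q : ℝ} (hp : 0 ≤ p) (hq : 0 ≤ q) (hp1 : p ≤ 1)
    (hq1 : q ≤ 1) : (p - q) ^ 2 / 4 ≤ (√p - √q) ^ 2 := by
  have h1 : √p ≤ 1 := Real.sqrt_le_one.2 hp1
  have h2 : √q ≤ 1 := Real.sqrt_le_one.2 hq1
  have h3 := Real.sqrt_nonneg p
  have h4 := Real.sqrt_nonneg q
  have h5 : p - q = (√p - √q) * (√p + √q) := by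
    nlinarith [Real.sq_sqrt hp, Real.sq_sqrt hq]
  have h6 : (√p + √q) ^ 2 ≤ 4 := by nlinarith
  rw [h5, mul_pow]
  nlinarith [mul_le_mul_of_nonneg_left h6 (sq_nonneg (√p - √q))]

/-- A weak form of the Pinsker inequality. -/
lemma sq_sub_div_four_le_klDivFin {X : Type*} [Fintype X] {p q : X → ℝ} (hp : ∀ x, 0 ≤ p x)
    (hq : ∀ x, 0 ≤ q x) (h : ∀ x, q x = 0 → p x = 0) (hp1 : ∑ x, p x = 1)
    (hq1 : ∑ x, q x = 1) (a : X) : (p a - q a) ^ 2 / 4 ≤ klDivFin p q := by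
  have hpa : p a ≤ 1 := hp1 ▸ Finset.single_le_sum (fun x _ => hp x) (Finset.mem_univ a)
  have hqa : q a ≤ 1 := hq1 ▸ Finset.single_le_sum (fun x _ => hq x) (Finset.mem_univ a)
  calc (p a - q a) ^ 2 / 4 ≤ (√(p a) - √(q a)) ^ 2 :=
        sq_sub_div_four_le_sqrt_sub_sq (hp a) (hq a) hpa hqa
    _ ≤ ∑ x, (√(p x) - √(q x)) ^ 2 :=
        Finset.single_le_sum (f := fun x => (√(p x) - √(q x)) ^ 2)
          (fun x _ => sq_nonneg _) (Finset.mem_univ a)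
    _ = ∑ x, ((√(p x) - √(q x)) ^ 2 + (p x - q x)) := by
        rw [Finset.sum_add_distrib, Finset.sum_sub_distrib, hp1, hq1]
        ring
    _ ≤ klDivFin p q :=
        Finset.sum_le_sum fun x _ => sqrt_sub_sq_le_mul_log (hp x) (hq x) (h x)

/-- A density matrix is at most `1`, since each of its eigenvalues is at most the trace. -/
lemma posSemidef_one_sub_of_trace_eq_one {d : ℕ} {τ : Matrix (Fin d) (Fin d) ℂ}
    (hτ : τ.PosSemidef) (htr : τ.trace = 1) : (1 - τ).PosSemidef := by
  have hH := hτ.isHermitian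
  have hsum : ∑ i, hH.eigenvalues i = 1 := by
    have := hH.trace_eq_sum_eigenvalues
    rw [htr] at this
    exact Complex.ofReal_injective (by push_cast; exact this.symm)
  have hle : ∀ i, hH.eigenvalues i ≤ 1 := fun i =>
    hsum ▸ Finset.single_le_sum (fun j _ => hτ.eigenvalues_nonneg j) (Finset.mem_univ i)
  have hdiag : (diagonal fun i => (1 : ℂ) - (hH.eigenvalues i : ℂ)).PosSemidef := by
    refine PosSemidef.diagonal fun i => ?_
    have := hle i
    simp only [Pi.zero_apply, sub_nonneg]
    exact_mod_cast this
  have hconj := hdiag.mul_mul_conjTranspose_same (hH.eigenvectorUnitary : Matrix (Fin d) (Fin d) ℂ)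
  convert hconj using 1
  have hs : (diagonal fun i => (1 : ℂ) - (hH.eigenvalues i : ℂ))
      = 1 - diagonal (RCLike.ofReal ∘ hH.eigenvalues) := by
    rw [← diagonal_one, diagonal_sub]
    rfl
  have hU : (hH.eigenvectorUnitary : Matrix (Fin d) (Fin d) ℂ)
      * (hH.eigenvectorUnitary : Matrix (Fin d) (Fin d) ℂ)ᴴ = 1 :=
    Unitary.coe_mul_star_self hH.eigenvectorUnitary
  rw [hs, mul_sub, sub_mul, mul_one, hU]
  congr 1
  conv_lhs => rw [hH.spectral_theorem]
  rfl

open scoped MatrixOrder in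
lemma re_trace_mul_pos {d : ℕ} [NeZero d] {A B : Matrix (Fin d) (Fin d) ℂ} (hA : A.PosDef)
    (hB : B.PosDef) : 0 < (A * B).trace.re := by
  -- With `B = Cᴴ C` and `C` invertible, the trace equals that of `C A Cᴴ`.
  obtain ⟨C, rfl⟩ := CStarAlgebra.nonneg_iff_eq_star_mul_self.1
    (nonneg_iff_posSemidef.2 hB.posSemidef)
  have hC : IsUnit C := by
    rw [isUnit_iff_isUnit_det]
    have := (isUnit_iff_isUnit_det _).1 hB.isUnit
    rw [det_mul] at this
    exact isUnit_of_mul_isUnit_right this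
  have h := (hA.mul_mul_conjTranspose_same (B := C) (vecMul_injective_of_isUnit hC)).trace_pos
  rw [← mul_assoc, trace_mul_comm, ← mul_assoc]
  exact (Complex.lt_def.1 h).1

theorem stmt7 {d : ℕ} {X : Type*} [Fintype X] (hX : 2 ≤ Fintype.card X)
    (ρ : Matrix (Fin d) (Fin d) ℂ) (hρ : ρ.PosDef) (hρtr : ρ.trace = 1)
    (D : Set (Matrix (Fin d) (Fin d) ℂ)) (hDne : D.Nonempty) (hDcompact : IsCompact D)
    (hDstates : ∀ σ ∈ D, σ.PosDef ∧ σ.trace = 1) (hρD : ρ ∉ D) :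
    ∃ η > (0 : ℝ), ∀ σ ∈ D, ∃ M : X → Matrix (Fin d) (Fin d) ℂ,
      IsPOVM M ∧ η ≤ klDivFin (probOf ρ M) (probOf σ M) := by
  classical
  have : NeZero d := ⟨by
    rintro rfl
    simp [Matrix.trace] at hρtr⟩
  obtain ⟨a, b, hab⟩ := Fintype.exists_pair_of_one_lt_card (lt_of_lt_of_le one_lt_two hX)
  have hcont : Continuous fun σ : Matrix (Fin d) (Fin d) ℂ =>
      ((ρ - σ) * (ρ - σ)).trace.re := by fun_prop
  obtain ⟨σ₀, hσ₀, hmin⟩ := hDcompact.exists_isMinOn hDne hcont.continuousOn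
  have hpos : 0 < ((ρ - σ₀) * (ρ - σ₀)).trace.re := by
    have hΔ : (ρ - σ₀)ᴴ = ρ - σ₀ := hρ.isHermitian.sub (hDstates σ₀ hσ₀).1.isHermitian
    have hps := posSemidef_conjTranspose_mul_self (ρ - σ₀)
    have hne : ((ρ - σ₀)ᴴ * (ρ - σ₀)).trace ≠ 0 := by
      rw [Ne, trace_conjTranspose_mul_self_eq_zero_iff, sub_eq_zero]
      rintro rfl
      exact hρD hσ₀
    have hlt := lt_of_le_of_ne hps.trace_nonneg hne.symm
    rw [hΔ] at hlt
    exact (Complex.lt_def.1 hlt).1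
  refine ⟨(((ρ - σ₀) * (ρ - σ₀)).trace.re / 2) ^ 2 / 4, by positivity, fun σ hσ => ?_⟩
  obtain ⟨hσp, hσtr⟩ := hDstates σ hσ
  have hle : ((ρ - σ₀) * (ρ - σ₀)).trace.re ≤ ((ρ - σ) * (ρ - σ)).trace.re := hmin hσ
  have half : (0 : ℝ) < 1 / 2 := by norm_num
  have hA : ((1 / 2 : ℝ) • ((1 - σ) + ρ)).PosDef :=
    (PosDef.posSemidef_add (posSemidef_one_sub_of_trace_eq_one hσp.posSemidef hσtr) hρ).smul half
  have hB : ((1 / 2 : ℝ) • ((1 - ρ) + σ)).PosDef :=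
    (PosDef.posSemidef_add (posSemidef_one_sub_of_trace_eq_one hρ.posSemidef hρtr) hσp).smul half
  set A := (1 / 2 : ℝ) • ((1 - σ) + ρ) with hAdef
  set B := (1 / 2 : ℝ) • ((1 - ρ) + σ) with hBdef
  have hAB : A + B = 1 := by
    rw [hAdef, hBdef, ← smul_add, show (1 - σ) + ρ + ((1 - ρ) + σ) = (2 : ℝ) • (1 : Matrix _ _ ℂ)
      by rw [two_smul]; abel, smul_smul]
    norm_num
  let M : X → Matrix (Fin d) (Fin d) ℂ := fun x => if x = a then A else if x = b then B else 0
  have hMa : M a = A := if_pos rfl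
  have hMb : M b = B := by simp [M, hab.symm]
  have hM0 : ∀ x, x ≠ a → x ≠ b → M x = 0 := fun x h1 h2 => by simp [M, h1, h2]
  have hMsum : ∑ x, M x = 1 := by
    rw [Fintype.sum_eq_add a b hab fun x hx => hM0 x hx.1 hx.2, hMa, hMb, hAB]
  -- Every outcome has a positive definite effect or effect zero, so its probability in a
  -- full-rank state is positive or vanishes identically.
  have hMcases : ∀ x, (M x).PosDef ∨ M x = 0 := fun x => by
    by_cases h1 : x = a
    · exact .inl (by rwa [h1, hMa])
    by_cases h2 : x = b
    · exact .inl (by rwa [h2, hMb])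
    exact .inr (hM0 x h1 h2)
  have hnn : ∀ τ : Matrix (Fin d) (Fin d) ℂ, τ.PosDef → ∀ x, 0 ≤ probOf τ M x := by
    intro τ hτ x
    rcases hMcases x with h | h
    · exact (re_trace_mul_pos h hτ).le
    · simp [probOf, h]
  have hac : ∀ x, probOf σ M x = 0 → probOf ρ M x = 0 := by
    intro x hx
    rcases hMcases x with h | h
    · exact absurd hx (re_trace_mul_pos h hσp).ne'
    · simp [probOf, h]
  have hone : ∀ τ : Matrix (Fin d) (Fin d) ℂ, τ.trace = 1 → ∑ x, probOf τ M x = 1 := by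
    intro τ hτ
    simp only [probOf]
    rw [← Complex.re_sum, ← trace_sum, ← Finset.sum_mul, hMsum, one_mul, hτ, Complex.one_re]
  refine ⟨M, ⟨fun x => ?_, hMsum⟩, ?_⟩
  · rcases hMcases x with h | h
    · exact h.posSemidef
    · rw [h]
      exact PosSemidef.zero
  · have hdiff : probOf ρ M a - probOf σ M a = ((ρ - σ) * (ρ - σ)).trace.re / 2 := by
      have htr0 : (ρ - σ).trace = 0 := by rw [trace_sub, hρtr, hσtr, sub_self]
      have hexp : A * (ρ - σ) = (1 / 2 : ℝ) • ((ρ - σ) + (ρ - σ) * (ρ - σ)) := by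
        rw [hAdef, smul_mul_assoc]
        congr 1
        noncomm_ring
      simp only [probOf, hMa]
      rw [← Complex.sub_re, ← trace_sub, ← mul_sub, hexp, trace_smul, trace_add, htr0, zero_add,
        Complex.smul_re, smul_eq_mul]
      ring
    have hkl := sq_sub_div_four_le_klDivFin (hnn ρ hρ) (hnn σ hσp) hac (hone ρ hρtr)
      (hone σ hσtr) a
    rw [hdiff] at hkl
    refine le_trans ?_ hkl
    gcongr
end

section
/- Let X be a finite set and let ρ be a full-rank density matrix on ℂ^d. Then on the set of pairs (σ, M), where σ ranges over the positive definite density matrices on ℂ^d (with the trace-norm topology) and M ranges over the POVMs on X (with the product topology induced by any matrix norm), both maps (σ, M) ↦ D(P_{ρ,M} ‖ P_{σ,M}) and (σ, M) ↦ D(P_{σ,M} ‖ P_{ρ,M}) are real-valued and jointly continuous. -/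
/-!
The divergence is a finite sum of terms `f log (f / g)` with `f = tr[M(x)ρ]`, `g = tr[M(x)σ]` (or
the roles exchanged), so continuity can be checked termwise. The only difficulty is at points where
`M(x) = 0`, since there `f = g = 0`. Put `t = tr M(x)`. Entries of a positive semidefinite matrix
are bounded by its trace, and a positive definite matrix dominates a positive multiple of the
identity; so, for `τ` near a fixed positive definite matrix, `c t ≤ tr[M(x)τ] ≤ C t` with constants
independent of `M` (`eventually_comparable`). Hence `|f log (f / g)| ≤ K t`, which tends to `0`
when `t` does, whereas if `t > 0` at the point then `f, g > 0` there and the term is continuous for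
elementary reasons (`continuousWithinAt_mul_log_div`).
-/

/- STATEMENT 18: joint continuity of the two measured relative entropy maps
(σ, M) ↦ D(P_{ρ,M} ‖ P_{σ,M}) and (σ, M) ↦ D(P_{σ,M} ‖ P_{ρ,M}) on the set of
pairs of a positive definite density matrix σ and a POVM M.  On this set the
KL divergence is finite and equal to the real-valued sum
∑ p(x)·log(p(x)/q(x)) (convention 0·log 0 = 0, valid since `Real.log 0 = 0`),
which is how we express that the maps are real-valued.  The topology is the
standard (product) topology on matrices and on families of matrices, which
coincides with the topology induced by the trace norm, and by any matrix norm,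
since all norms on a finite-dimensional space are equivalent. -/

open Matrix
open scoped ComplexOrder

open scoped Topology MatrixOrder

lemma exists_gram {d : ℕ} {M : Matrix (Fin d) (Fin d) ℂ} (hM : M.PosSemidef) :
    ∃ B : Matrix (Fin d) (Fin d) ℂ, M = Bᴴ * B :=
  CStarAlgebra.nonneg_iff_eq_star_mul_self.1 (Matrix.nonneg_iff_posSemidef.2 hM)

/-- Every entry of a positive semidefinite matrix is dominated by the trace. -/
lemma norm_entry_le_trace {d : ℕ} {M : Matrix (Fin d) (Fin d) ℂ} (hM : M.PosSemidef)
    (i j : Fin d) : ‖M i j‖ ≤ M.trace.re := by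
  obtain ⟨B, rfl⟩ := exists_gram hM
  have htr : (Bᴴ * B).trace.re = ∑ k, ∑ l, ‖B k l‖ ^ 2 := by
    rw [Finset.sum_comm]
    simp only [Matrix.trace, Matrix.diag, Matrix.mul_apply, Matrix.conjTranspose_apply,
      Complex.re_sum]
    refine Finset.sum_congr rfl fun l _ => Finset.sum_congr rfl fun k _ => ?_
    rw [← Complex.normSq_eq_norm_sq, Complex.normSq_apply]
    simp
  rw [htr, Matrix.mul_apply]
  refine (norm_sum_le _ _).trans (Finset.sum_le_sum fun k _ => ?_)
  have h (l : Fin d) : ‖B k l‖ ^ 2 ≤ ∑ l, ‖B k l‖ ^ 2 :=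
    Finset.single_le_sum (f := fun l => ‖B k l‖ ^ 2) (fun _ _ => sq_nonneg _) (Finset.mem_univ l)
  have := h i
  have := h j
  simp only [Matrix.conjTranspose_apply, norm_mul, norm_star]
  nlinarith [sq_nonneg (‖B k i‖ - ‖B k j‖)]

lemma abs_trace_mul_le {d : ℕ} {M : Matrix (Fin d) (Fin d) ℂ} (hM : M.PosSemidef)
    (A : Matrix (Fin d) (Fin d) ℂ) :
    |(M * A).trace.re| ≤ (∑ i, ∑ j, ‖A j i‖) * M.trace.re := by
  refine (Complex.abs_re_le_norm _).trans ?_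
  simp only [Matrix.trace, Matrix.diag, Matrix.mul_apply, Finset.sum_mul]
  refine (norm_sum_le _ _).trans (Finset.sum_le_sum fun i _ => ?_)
  refine (norm_sum_le _ _).trans (Finset.sum_le_sum fun j _ => ?_)
  rw [norm_mul, mul_comm]
  exact mul_le_mul_of_nonneg_left (norm_entry_le_trace hM i j) (norm_nonneg _)

/-- A positive definite `σ` dominates `c • 1` for some `c > 0` (its least eigenvalue, say), and
pairing a positive semidefinite `M` with `σ - c • 1` gives a nonnegative number. -/
lemma exists_mul_trace_le {d : ℕ} {σ : Matrix (Fin d) (Fin d) ℂ} (hσ : σ.PosDef) :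
    ∃ c : ℝ, 0 < c ∧ ∀ M : Matrix (Fin d) (Fin d) ℂ, M.PosSemidef →
      c * M.trace.re ≤ (M * σ).trace.re := by
  obtain ⟨c, hc, h⟩ : ∃ c : ℝ, 0 < c ∧ (σ - algebraMap ℝ _ c).PosSemidef := by
    rcases isEmpty_or_nonempty (Fin d) with he | he
    · exact ⟨1, one_pos, by rw [Subsingleton.elim (σ - _) 0]; exact Matrix.PosSemidef.zero⟩
    · obtain ⟨c, hc, h⟩ := (CFC.exists_pos_algebraMap_le_iff (a := σ) hσ.isHermitian).2
        (fun x hx => by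
          rw [hσ.isHermitian.spectrum_real_eq_range_eigenvalues] at hx
          obtain ⟨i, rfl⟩ := hx
          exact hσ.eigenvalues_pos i)
      exact ⟨c, hc, h⟩
  refine ⟨c, hc, fun M hM => ?_⟩
  obtain ⟨B, rfl⟩ := exists_gram hM
  have h1 := (Complex.nonneg_iff.1 (h.mul_mul_conjTranspose_same B).trace_nonneg).1
  rw [Matrix.trace_mul_comm, ← Matrix.mul_assoc, Matrix.mul_sub, Matrix.trace_sub,
    Complex.sub_re, Algebra.algebraMap_eq_smul_one, Matrix.mul_smul, Matrix.mul_one,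
    Matrix.trace_smul, Complex.smul_re, smul_eq_mul] at h1
  linarith

/-- Near a positive definite matrix, `tr[Mτ]` is comparable to `tr M`, with constants that do
not depend on the positive semidefinite matrix `M`. -/
lemma eventually_comparable {d : ℕ} {σ : Matrix (Fin d) (Fin d) ℂ} (hσ : σ.PosDef) :
    ∃ c C : ℝ, 0 < c ∧ 0 < C ∧ ∀ᶠ τ in 𝓝 σ, ∀ M : Matrix (Fin d) (Fin d) ℂ, M.PosSemidef →
      c * M.trace.re ≤ (M * τ).trace.re ∧ (M * τ).trace.re ≤ C * M.trace.re := by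
  obtain ⟨c, hc, h⟩ := exists_mul_trace_le hσ
  have hcont : Continuous fun τ : Matrix (Fin d) (Fin d) ℂ => ∑ i, ∑ j, ‖(τ - σ) j i‖ := by
    fun_prop
  have hev : ∀ᶠ τ in 𝓝 σ, ∑ i, ∑ j, ‖(τ - σ) j i‖ < c / 2 :=
    hcont.continuousAt.eventually_lt continuousAt_const (by simpa using hc)
  refine ⟨c / 2, (∑ i, ∑ j, ‖σ j i‖) + c / 2, by positivity, by positivity, ?_⟩
  filter_upwards [hev] with τ hτ M hM
  have ht : 0 ≤ M.trace.re := (Complex.nonneg_iff.1 hM.trace_nonneg).1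
  have h1 := abs_le.1 (abs_trace_mul_le hM (τ - σ))
  have h2 := (abs_le.1 (abs_trace_mul_le hM σ)).2
  have h3 := mul_le_mul_of_nonneg_right hτ.le ht
  have h4 := h M hM
  rw [Matrix.mul_sub, Matrix.trace_sub, Complex.sub_re] at h1
  constructor <;> nlinarith

/-- If `f` and `g` are both comparable to the same quantity `t`, then `log (f / g)` is bounded
where `t ≠ 0`, and `f` vanishes where `t = 0`. -/
lemma abs_mul_log_div_le {f g t c C c' C' : ℝ} (hc : 0 < c) (hC : 0 < C) (hc' : 0 < c')
    (hC' : 0 < C') (ht : 0 ≤ t) (hf : c * t ≤ f ∧ f ≤ C * t) (hg : c' * t ≤ g ∧ g ≤ C' * t) :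
    |f * Real.log (f / g)| ≤ C * (|Real.log (c / C')| + |Real.log (C / c')|) * t := by
  rcases ht.eq_or_lt with rfl | ht
  · have : f = 0 := by linarith [hf.1, hf.2]
    simp [this]
  have hf0 : 0 < f := (mul_pos hc ht).trans_le hf.1
  have hg0 : 0 < g := (mul_pos hc' ht).trans_le hg.1
  have h1 : Real.log (c / C') ≤ Real.log (f / g) := by
    refine Real.log_le_log (by positivity) ?_
    rw [div_le_div_iff₀ hC' hg0]
    nlinarith [mul_le_mul_of_nonneg_left hg.2 hc.le, mul_le_mul_of_nonneg_right hf.1 hC'.le]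
  have h2 : Real.log (f / g) ≤ Real.log (C / c') := by
    refine Real.log_le_log (by positivity) ?_
    rw [div_le_div_iff₀ hg0 hc']
    nlinarith [mul_le_mul_of_nonneg_left hg.1 hC.le, mul_le_mul_of_nonneg_right hf.2 hc'.le]
  have h3 : |Real.log (f / g)| ≤ |Real.log (c / C')| + |Real.log (C / c')| := by
    rw [abs_le]
    constructor <;>
    linarith [neg_abs_le (Real.log (c / C')), le_abs_self (Real.log (C / c')),
      abs_nonneg (Real.log (c / C')), abs_nonneg (Real.log (C / c'))]
  rw [abs_mul, abs_of_pos hf0]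
  calc f * |Real.log (f / g)| ≤ (C * t) * (|Real.log (c / C')| + |Real.log (C / c')|) :=
        mul_le_mul hf.2 h3 (abs_nonneg _) (by positivity)
    _ = _ := by ring

/-- Although `f / g` need not have a limit at a common zero of `f` and `g`, the expression `f log (f / g)` is
continuous there, with value `0`, as soon as `f` and `g` are comparable to the same `t ≥ 0`. -/
lemma continuousWithinAt_mul_log_div {α : Type*} [TopologicalSpace α] {S : Set α} {a : α}
    (ha : a ∈ S) {f g t : α → ℝ} (hfc : ContinuousAt f a) (hgc : ContinuousAt g a)
    (htc : ContinuousAt t a) (ht : ∀ b ∈ S, 0 ≤ t b) {c C c' C' : ℝ}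
    (hc : 0 < c) (hC : 0 < C) (hc' : 0 < c') (hC' : 0 < C')
    (hf : ∀ᶠ b in 𝓝[S] a, c * t b ≤ f b ∧ f b ≤ C * t b)
    (hg : ∀ᶠ b in 𝓝[S] a, c' * t b ≤ g b ∧ g b ≤ C' * t b) :
    ContinuousWithinAt (fun b => f b * Real.log (f b / g b)) S a := by
  have hfa := hf.self_of_nhdsWithin ha
  have hga := hg.self_of_nhdsWithin ha
  rcases (ht a ha).eq_or_lt with h0 | h0
  · have hfz : f a = 0 := by rw [← h0] at hfa; linarith [hfa.1, hfa.2]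
    rw [ContinuousWithinAt, hfz, zero_mul]
    refine squeeze_zero_norm'
      (a := fun b => C * (|Real.log (c / C')| + |Real.log (C / c')|) * t b) ?_ ?_
    · filter_upwards [hf, hg, self_mem_nhdsWithin] with b h1 h2 h3
      exact abs_mul_log_div_le hc hC hc' hC' (ht b h3) h1 h2
    · have := (htc.const_mul (C * (|Real.log (c / C')| + |Real.log (C / c')|))).mono_left
        (nhdsWithin_le_nhds (s := S))
      simpa [← h0] using this
  · have hf0 : 0 < f a := (mul_pos hc h0).trans_le hfa.1
    have hg0 : 0 < g a := (mul_pos hc' h0).trans_le hga.1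
    exact (hfc.mul ((hfc.div hgc hg0.ne').log (div_pos hf0 hg0).ne')).continuousWithinAt

theorem stmt18 {d : ℕ} {X : Type*} [Fintype X]
    (ρ : Matrix (Fin d) (Fin d) ℂ) (hρ : ρ.PosDef) (hρtr : ρ.trace = 1) :
    ContinuousOn
      (fun p : Matrix (Fin d) (Fin d) ℂ × (X → Matrix (Fin d) (Fin d) ℂ) =>
        klDivFin (probOf ρ p.2) (probOf p.1 p.2))
      {p | p.1.PosDef ∧ p.1.trace = 1 ∧ IsPOVM p.2} ∧
    ContinuousOn
      (fun p : Matrix (Fin d) (Fin d) ℂ × (X → Matrix (Fin d) (Fin d) ℂ) =>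
        klDivFin (probOf p.1 p.2) (probOf ρ p.2))
      {p | p.1.PosDef ∧ p.1.trace = 1 ∧ IsPOVM p.2} := by
  obtain ⟨c, C, hc, hC, hev⟩ := eventually_comparable hρ
  have hcmp := hev.self_of_nhds
  have key : ∀ p ∈ {p : Matrix (Fin d) (Fin d) ℂ × (X → Matrix (Fin d) (Fin d) ℂ) |
      p.1.PosDef ∧ p.1.trace = 1 ∧ IsPOVM p.2}, ∃ c' C' : ℝ, 0 < c' ∧ 0 < C' ∧ ∀ x,
      ∀ᶠ q in 𝓝[{p | p.1.PosDef ∧ p.1.trace = 1 ∧ IsPOVM p.2}] p,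
        c' * (q.2 x).trace.re ≤ (q.2 x * q.1).trace.re ∧
        (q.2 x * q.1).trace.re ≤ C' * (q.2 x).trace.re := by
    intro p hp
    obtain ⟨c', C', hc', hC', h⟩ := eventually_comparable hp.1
    refine ⟨c', C', hc', hC', fun x => ?_⟩
    filter_upwards [nhdsWithin_le_nhds (continuousAt_fst.eventually h), self_mem_nhdsWithin]
      with q h1 h2
    exact h1 _ (h2.2.2.1 x)
  have contρ (x : X) : Continuous fun q : Matrix (Fin d) (Fin d) ℂ ×
      (X → Matrix (Fin d) (Fin d) ℂ) => (q.2 x * ρ).trace.re := by fun_prop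
  have contσ (x : X) : Continuous fun q : Matrix (Fin d) (Fin d) ℂ ×
      (X → Matrix (Fin d) (Fin d) ℂ) => (q.2 x * q.1).trace.re := by fun_prop
  have contt (x : X) : Continuous fun q : Matrix (Fin d) (Fin d) ℂ ×
      (X → Matrix (Fin d) (Fin d) ℂ) => (q.2 x).trace.re := by fun_prop
  constructor
  · intro p hp
    obtain ⟨c', C', hc', hC', h⟩ := key p hp
    refine tendsto_finsetSum _ fun x _ => ?_
    exact continuousWithinAt_mul_log_div hp (contρ x).continuousAt (contσ x).continuousAt
      (contt x).continuousAt
      (fun q hq => (Complex.nonneg_iff.1 (hq.2.2.1 x).trace_nonneg).1) hc hC hc' hC'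
      (eventually_nhdsWithin_of_forall fun q hq => hcmp _ (hq.2.2.1 x)) (h x)
  · intro p hp
    obtain ⟨c', C', hc', hC', h⟩ := key p hp
    refine tendsto_finsetSum _ fun x _ => ?_
    exact continuousWithinAt_mul_log_div hp (contσ x).continuousAt (contρ x).continuousAt
      (contt x).continuousAt
      (fun q hq => (Complex.nonneg_iff.1 (hq.2.2.1 x).trace_nonneg).1) hc' hC' hc hC
      (h x) (eventually_nhdsWithin_of_forall fun q hq => hcmp _ (hq.2.2.1 x))
end
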